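/- arXiv:2209.03749 — 2 statements merged into one kernel-verified Lean document; each statement's English description precedes it below -/
import Mathlib

section
/- For the Robinson–Trautman metric, the nonzero components of the Ricci tensor (in coordinates indexed 1=t, 2=r, 3=x, 4=y) are S_{11} = -8b(d + r(-a + 2br))/r², S_{12} = S_{21} = -4b/r, and S_{33} = S_{44} = (-2a + 8br + f_x² + f_y² - f(f_{xx} + f_{yy}))/f². -/
open scoped BigOperators

noncomputable section

/-- Points of the coordinate chart `(t,r,x,y)`. -/
abbrev RTPt := Fin 4 → ℝ

/-- Partial derivative in coordinate direction `i`. -/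
def RTpd (i : Fin 4) (F : RTPt → ℝ) (p : RTPt) : ℝ :=
  deriv (fun s => F (Function.update p i s)) (p i)

/-- partial derivative of `f(x,y)` in `x`. -/
def pX (f : ℝ → ℝ → ℝ) (x y : ℝ) : ℝ := deriv (fun s => f s y) x

/-- partial derivative of `f(x,y)` in `y`. -/
def pY (f : ℝ → ℝ → ℝ) (x y : ℝ) : ℝ := deriv (fun s => f x s) y

/-- The Robinson–Trautman metric components. -/
def RTg (a b d : ℝ) (f : ℝ → ℝ → ℝ) (i j : Fin 4) (p : RTPt) : ℝ :=
  if i = 0 ∧ j = 0 then -2 * (a - 2 * b * p 1 - d / p 1)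
  else if (i = 0 ∧ j = 1) ∨ (i = 1 ∧ j = 0) then 1
  else if (i = 2 ∧ j = 2) ∨ (i = 3 ∧ j = 3) then -(p 1)^2 / (f (p 2) (p 3))^2
  else 0

/-- The inverse Robinson–Trautman metric components. -/
def RTgInv (a b d : ℝ) (f : ℝ → ℝ → ℝ) (i j : Fin 4) (p : RTPt) : ℝ :=
  if i = 1 ∧ j = 1 then 2 * (a - 2 * b * p 1 - d / p 1)
  else if (i = 0 ∧ j = 1) ∨ (i = 1 ∧ j = 0) then 1
  else if (i = 2 ∧ j = 2) ∨ (i = 3 ∧ j = 3) then -(f (p 2) (p 3))^2 / (p 1)^2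
  else 0

/-- Christoffel symbols `Γ^k_{ij}` of the Levi-Civita connection of the RT metric. -/
def RTGamma (a b d : ℝ) (f : ℝ → ℝ → ℝ) (k i j : Fin 4) (p : RTPt) : ℝ :=
  (1/2) * ∑ l : Fin 4, RTgInv a b d f k l p *
    (RTpd i (RTg a b d f l j) p + RTpd j (RTg a b d f l i) p - RTpd l (RTg a b d f i j) p)

/-- `(0,4)` Riemann curvature tensor
`R_{pqrs} = g_{pα}(∂_s Γ^α_{qr} - ∂_r Γ^α_{qs} + Γ^β_{qr}Γ^α_{βs} - Γ^β_{qs}Γ^α_{βr})`. -/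
def RTRiem (a b d : ℝ) (f : ℝ → ℝ → ℝ) (i j k l : Fin 4) (p : RTPt) : ℝ :=
  ∑ α : Fin 4, RTg a b d f i α p *
    (RTpd l (RTGamma a b d f α j k) p - RTpd k (RTGamma a b d f α j l) p
      + ∑ β : Fin 4, (RTGamma a b d f β j k p * RTGamma a b d f α β l p
          - RTGamma a b d f β j l p * RTGamma a b d f α β k p))

/-- Ricci tensor `S_{ij} = R^k_{ikj}` of the RT metric. -/
def RTRic (a b d : ℝ) (f : ℝ → ℝ → ℝ) (i j : Fin 4) (p : RTPt) : ℝ :=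
  ∑ k : Fin 4, ∑ l : Fin 4, RTgInv a b d f k l p * RTRiem a b d f l i k j p

/-- Scalar curvature of the RT metric. -/
def RTScal (a b d : ℝ) (f : ℝ → ℝ → ℝ) (p : RTPt) : ℝ :=
  ∑ i : Fin 4, ∑ j : Fin 4, RTgInv a b d f i j p * RTRic a b d f i j p

/-- Lie derivative of a `(0,2)` tensor field along a vector field `X`. -/
def RTlie2 (X : RTPt → Fin 4 → ℝ) (T : Fin 4 → Fin 4 → RTPt → ℝ) (i j : Fin 4) (p : RTPt) : ℝ :=
  (∑ k : Fin 4, X p k * RTpd k (T i j) p)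
  + (∑ k : Fin 4, T k j p * RTpd i (fun q => X q k) p)
  + (∑ k : Fin 4, T i k p * RTpd j (fun q => X q k) p)

/-- Lie derivative of a `(0,4)` tensor field along a vector field `X`. -/
def RTlie4 (X : RTPt → Fin 4 → ℝ) (T : Fin 4 → Fin 4 → Fin 4 → Fin 4 → RTPt → ℝ)
    (i j k l : Fin 4) (p : RTPt) : ℝ :=
  (∑ m : Fin 4, X p m * RTpd m (T i j k l) p)
  + (∑ m : Fin 4, T m j k l p * RTpd i (fun q => X q m) p)
  + (∑ m : Fin 4, T i m k l p * RTpd j (fun q => X q m) p)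
  + (∑ m : Fin 4, T i j m l p * RTpd k (fun q => X q m) p)
  + (∑ m : Fin 4, T i j k m p * RTpd l (fun q => X q m) p)

/-- Kulkarni–Nomizu product of two `(0,2)` tensor fields. -/
def RTKN (A B : Fin 4 → Fin 4 → RTPt → ℝ) (i j k l : Fin 4) (p : RTPt) : ℝ :=
  A i l p * B j k p - A i k p * B j l p + A j k p * B i l p - A j l p * B i k p

/-- `F₁ = f_x² + f_y² - f(f_{xx} + f_{yy})`. -/
def F1 (f : ℝ → ℝ → ℝ) (x y : ℝ) : ℝ :=
  (pX f x y)^2 + (pY f x y)^2 - f x y * (pX (pX f) x y + pY (pY f) x y)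

/-- `F₁ᵐ = f_x² + f_y² - f(f_{xx} - f_{yy})`. -/
def F1m (f : ℝ → ℝ → ℝ) (x y : ℝ) : ℝ :=
  (pX f x y)^2 + (pY f x y)^2 - f x y * (pX (pX f) x y - pY (pY f) x y)

/-- `F₁₁` from the paper. -/
def F11 (a b : ℝ) (f : ℝ → ℝ → ℝ) (r x y : ℝ) : ℝ :=
  -2*(pX f x y)^3
  + pX f x y * (4*a - 16*b*r - 2*(pY f x y)^2 + f x y * (pY (pY f) x y + 3*pX (pX f) x y))
  - f x y * (-2*pY f x y * pY (pX f) x y + f x y * (pX (pX (pX f)) x y + pY (pY (pX f)) x y))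

/-- `F₁₃` from the paper. -/
def F13 (a b : ℝ) (f : ℝ → ℝ → ℝ) (r x y : ℝ) : ℝ :=
  -2*(pY f x y)^3
  + pY f x y * (4*a - 16*b*r - 2*(pX f x y)^2 + f x y * (3*pY (pY f) x y + pX (pX f) x y))
  - f x y * (-2*pX f x y * pY (pX f) x y + f x y * (pY (pY (pY f)) x y + pY (pX (pX f)) x y))

/-! ### Helper lemmas -/

set_option linter.all false
set_option linter.unusedSimpArgs false
set_option linter.unreachableTactic false
set_option linter.unusedTactic false


lemma RTpd_congr {F G : RTPt → ℝ} (h : ∀ q : RTPt, q 1 ≠ 0 → F q = G q) (i : Fin 4)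
    (p : RTPt) (hp : p 1 ≠ 0) : RTpd i F p = RTpd i G p := by
  unfold RTpd
  apply Filter.EventuallyEq.deriv_eq
  have hc : Continuous (fun s : ℝ => (Function.update p i s) 1) :=
    (continuous_apply (1 : Fin 4)).comp
      ((continuous_const (y := p)).update i continuous_id)
  have h1 : ∀ᶠ s in nhds (p i), (Function.update p i s) 1 ≠ 0 := by
    apply hc.continuousAt.eventually_ne
    simpa using hp
  filter_upwards [h1] with s hs
  exact h _ hs

lemma RTpd_neg (i : Fin 4) (F : RTPt → ℝ) (p : RTPt) :
    RTpd i (fun q => - F q) p = - RTpd i F p := by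
  unfold RTpd
  simp

lemma RTpd_const (i : Fin 4) (c : ℝ) (p : RTPt) : RTpd i (fun _ => c) p = 0 := by
  unfold RTpd
  simp

/-- A function of the separated form `φ(r) ψ(x,y)`. -/
def RTsep (φ : ℝ → ℝ) (ψ : ℝ → ℝ → ℝ) (q : RTPt) : ℝ := φ (q 1) * ψ (q 2) (q 3)

lemma RTsep_pd0 (φ : ℝ → ℝ) (ψ : ℝ → ℝ → ℝ) (p : RTPt) : RTpd 0 (RTsep φ ψ) p = 0 := by
  simp [RTpd, RTsep]

lemma RTsep_pd1 (φ : ℝ → ℝ) (ψ : ℝ → ℝ → ℝ) (p : RTPt) {φ' : ℝ} (h : HasDerivAt φ φ' (p 1)) :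
    RTpd 1 (RTsep φ ψ) p = φ' * ψ (p 2) (p 3) := by
  simp [RTpd, RTsep, h.deriv]

lemma RTsep_pd2 (φ : ℝ → ℝ) (ψ : ℝ → ℝ → ℝ) (p : RTPt) {ψ' : ℝ}
    (h : HasDerivAt (fun s => ψ s (p 3)) ψ' (p 2)) :
    RTpd 2 (RTsep φ ψ) p = φ (p 1) * ψ' := by
  simp [RTpd, RTsep, h.deriv]

lemma RTsep_pd3 (φ : ℝ → ℝ) (ψ : ℝ → ℝ → ℝ) (p : RTPt) {ψ' : ℝ}
    (h : HasDerivAt (fun s => ψ (p 2) s) ψ' (p 3)) :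
    RTpd 3 (RTsep φ ψ) p = φ (p 1) * ψ' := by
  simp [RTpd, RTsep, h.deriv]

section smooth

lemma pX_eq {f : ℝ → ℝ → ℝ} (hf : ContDiff ℝ (⊤ : ℕ∞) (Function.uncurry f)) (x y : ℝ) :
    HasDerivAt (fun s => f s y) (fderiv ℝ (Function.uncurry f) (x, y) (1, 0)) x := by
  have h1 : HasFDerivAt (Function.uncurry f) (fderiv ℝ (Function.uncurry f) (x, y)) (x, y) :=
    (hf.differentiable (by simp) _).hasFDerivAt
  have h2 : HasDerivAt (fun s : ℝ => (s, y)) ((1 : ℝ), (0 : ℝ)) x :=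
    (hasDerivAt_id x).prodMk (hasDerivAt_const x y)
  exact h1.comp_hasDerivAt x h2

lemma pY_eq {f : ℝ → ℝ → ℝ} (hf : ContDiff ℝ (⊤ : ℕ∞) (Function.uncurry f)) (x y : ℝ) :
    HasDerivAt (fun s => f x s) (fderiv ℝ (Function.uncurry f) (x, y) (0, 1)) y := by
  have h1 : HasFDerivAt (Function.uncurry f) (fderiv ℝ (Function.uncurry f) (x, y)) (x, y) :=
    (hf.differentiable (by simp) _).hasFDerivAt
  have h2 : HasDerivAt (fun s : ℝ => (x, s)) ((0 : ℝ), (1 : ℝ)) y :=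
    (hasDerivAt_const y x).prodMk (hasDerivAt_id y)
  exact h1.comp_hasDerivAt y h2

lemma hasX {f : ℝ → ℝ → ℝ} (hf : ContDiff ℝ (⊤ : ℕ∞) (Function.uncurry f)) (x y : ℝ) :
    HasDerivAt (fun s => f s y) (pX f x y) x := (pX_eq hf x y).differentiableAt.hasDerivAt

lemma hasY {f : ℝ → ℝ → ℝ} (hf : ContDiff ℝ (⊤ : ℕ∞) (Function.uncurry f)) (x y : ℝ) :
    HasDerivAt (fun s => f x s) (pY f x y) y := (pY_eq hf x y).differentiableAt.hasDerivAt

lemma pX_fun {f : ℝ → ℝ → ℝ} (hf : ContDiff ℝ (⊤ : ℕ∞) (Function.uncurry f)) :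
    Function.uncurry (pX f) = fun z => fderiv ℝ (Function.uncurry f) z (1, 0) := by
  funext ⟨x, y⟩
  exact (pX_eq hf x y).deriv

lemma pY_fun {f : ℝ → ℝ → ℝ} (hf : ContDiff ℝ (⊤ : ℕ∞) (Function.uncurry f)) :
    Function.uncurry (pY f) = fun z => fderiv ℝ (Function.uncurry f) z (0, 1) := by
  funext ⟨x, y⟩
  exact (pY_eq hf x y).deriv

lemma pX_smooth {f : ℝ → ℝ → ℝ} (hf : ContDiff ℝ (⊤ : ℕ∞) (Function.uncurry f)) :
    ContDiff ℝ (⊤ : ℕ∞) (Function.uncurry (pX f)) := by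
  rw [pX_fun hf]
  exact (hf.fderiv_right (m := (⊤ : ℕ∞)) (by simp)).clm_apply contDiff_const

lemma pY_smooth {f : ℝ → ℝ → ℝ} (hf : ContDiff ℝ (⊤ : ℕ∞) (Function.uncurry f)) :
    ContDiff ℝ (⊤ : ℕ∞) (Function.uncurry (pY f)) := by
  rw [pY_fun hf]
  exact (hf.fderiv_right (m := (⊤ : ℕ∞)) (by simp)).clm_apply contDiff_const

lemma pXY_comm {f : ℝ → ℝ → ℝ} (hf : ContDiff ℝ (⊤ : ℕ∞) (Function.uncurry f)) (x y : ℝ) :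
    pX (pY f) x y = pY (pX f) x y := by
  have hd : ContDiff ℝ (⊤ : ℕ∞) (fderiv ℝ (Function.uncurry f)) :=
    hf.fderiv_right (m := (⊤ : ℕ∞)) (by simp)
  have hdd : DifferentiableAt ℝ (fderiv ℝ (Function.uncurry f)) (x, y) :=
    hd.differentiable (by simp) _
  have e1 : pX (pY f) x y
      = fderiv ℝ (fderiv ℝ (Function.uncurry f)) (x, y) (1, 0) (0, 1) := by
    have := (pX_eq (pY_smooth hf) x y).deriv
    rw [pY_fun hf, fderiv_clm_apply hdd (by fun_prop)] at this
    simpa [pX] using this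
  have e2 : pY (pX f) x y
      = fderiv ℝ (fderiv ℝ (Function.uncurry f)) (x, y) (0, 1) (1, 0) := by
    have := (pY_eq (pX_smooth hf) x y).deriv
    rw [pX_fun hf, fderiv_clm_apply hdd (by fun_prop)] at this
    simpa [pY] using this
  rw [e1, e2]
  have hs : IsSymmSndFDerivAt ℝ (Function.uncurry f) (x, y) :=
    hf.contDiffAt.isSymmSndFDerivAt (by
      simp only [minSmoothness_of_isRCLikeNormedField]; exact WithTop.coe_le_coe.mpr le_top)
  exact hs.eq _ _

end smooth

/-- `g_{tt}`. -/
def RTq0 (a b d : ℝ) : RTPt → ℝ := RTsep (fun r => -2 * (a - 2 * b * r - d / r)) (fun _ _ => 1)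
/-- `g_{xx}`. -/
def RTq1 (f : ℝ → ℝ → ℝ) : RTPt → ℝ := RTsep (fun r => -r^2) (fun x y => 1 / (f x y)^2)
/-- `Γ^t_{tt}`. -/
def RTH1 (b d : ℝ) : RTPt → ℝ := RTsep (fun r => -2 * b + d / r^2) (fun _ _ => 1)
/-- `Γ^r_{tt}`. -/
def RTH2 (a b d : ℝ) : RTPt → ℝ :=
  RTsep (fun r => 2 * (a - 2 * b * r - d / r) * (-2 * b + d / r^2)) (fun _ _ => 1)
/-- `Γ^t_{xx}`. -/
def RTT1 (f : ℝ → ℝ → ℝ) : RTPt → ℝ := RTsep (fun r => r) (fun x y => 1 / (f x y)^2)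
/-- `Γ^r_{xx}`. -/
def RTT2 (a b d : ℝ) (f : ℝ → ℝ → ℝ) : RTPt → ℝ :=
  RTsep (fun r => 2 * (a - 2 * b * r - d / r) * r) (fun x y => 1 / (f x y)^2)
/-- `Γ^x_{rx}`. -/
def RTR : RTPt → ℝ := RTsep (fun r => 1 / r) (fun _ _ => 1)
/-- `f_x / f`. -/
def RTU (f : ℝ → ℝ → ℝ) : RTPt → ℝ := RTsep (fun _ => 1) (fun x y => pX f x y / f x y)
/-- `f_y / f`. -/
def RTV (f : ℝ → ℝ → ℝ) : RTPt → ℝ := RTsep (fun _ => 1) (fun x y => pY f x y / f x y)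

/-- Closed form of the metric. -/
def RTgx (a b d : ℝ) (f : ℝ → ℝ → ℝ) (i j : Fin 4) : RTPt → ℝ :=
  match i, j with
  | 0, 0 => RTq0 a b d
  | 0, 1 => fun _ => 1
  | 1, 0 => fun _ => 1
  | 2, 2 => RTq1 f
  | 3, 3 => RTq1 f
  | _, _ => fun _ => 0

/-- Closed form of the Christoffel symbols. -/
def RTGx (a b d : ℝ) (f : ℝ → ℝ → ℝ) (k i j : Fin 4) : RTPt → ℝ :=
  match k, i, j with
  | 0, 0, 0 => RTH1 b d
  | 0, 2, 2 => RTT1 f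
  | 0, 3, 3 => RTT1 f
  | 1, 0, 0 => RTH2 a b d
  | 1, 0, 1 => fun q => - RTH1 b d q
  | 1, 1, 0 => fun q => - RTH1 b d q
  | 1, 2, 2 => RTT2 a b d f
  | 1, 3, 3 => RTT2 a b d f
  | 2, 1, 2 => RTR
  | 2, 2, 1 => RTR
  | 2, 2, 2 => fun q => - RTU f q
  | 2, 2, 3 => fun q => - RTV f q
  | 2, 3, 2 => fun q => - RTV f q
  | 2, 3, 3 => RTU f
  | 3, 1, 3 => RTR
  | 3, 3, 1 => RTR
  | 3, 3, 3 => fun q => - RTV f q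
  | 3, 2, 3 => fun q => - RTU f q
  | 3, 3, 2 => fun q => - RTU f q
  | 3, 2, 2 => RTV f
  | _, _, _ => fun _ => 0

lemma RTg_eq (a b d : ℝ) (f : ℝ → ℝ → ℝ) (i j : Fin 4) : RTg a b d f i j = RTgx a b d f i j := by
  funext q
  fin_cases i <;> fin_cases j <;> simp [RTg, RTgx, RTq0, RTq1, RTsep, div_eq_mul_inv]

section derivs

variable (a b d : ℝ) (f : ℝ → ℝ → ℝ) (p : RTPt)

lemma der_h (a b d : ℝ) {r : ℝ} (hr : r ≠ 0) :
    HasDerivAt (fun r : ℝ => a - 2 * b * r - d / r) (-2 * b + d / r^2) r := by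
  have h1 : HasDerivAt (fun r : ℝ => 2 * b * r) (2 * b * 1) r := (hasDerivAt_id r).const_mul _
  have h2 : HasDerivAt (fun r : ℝ => d / r) _ r :=
    (hasDerivAt_const r d).fun_div (hasDerivAt_id r) hr
  refine (((hasDerivAt_const r a).fun_sub h1).fun_sub h2).congr_deriv ?_
  ring

lemma der_h1 (b d : ℝ) {r : ℝ} (hr : r ≠ 0) :
    HasDerivAt (fun r : ℝ => -2 * b + d / r^2) (-2 * d / r^3) r := by
  have h2 : HasDerivAt (fun r : ℝ => d / r^2) _ r :=
    (hasDerivAt_const r d).fun_div (hasDerivAt_pow 2 r) (pow_ne_zero 2 hr)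
  refine (h2.const_add (-2 * b)).congr_deriv ?_
  field_simp
  simp
  ring

lemma der_invX {f : ℝ → ℝ → ℝ} (hf : ContDiff ℝ (⊤ : ℕ∞) (Function.uncurry f))
    (hf0 : ∀ x y, f x y ≠ 0) (x y : ℝ) :
    HasDerivAt (fun s => 1 / (f s y)^2) (-2 * pX f x y / (f x y)^3) x := by
  have h0 := hf0 x y
  refine ((hasDerivAt_const x (1:ℝ)).fun_div ((hasX hf x y).fun_pow 2)
    (pow_ne_zero 2 h0)).congr_deriv ?_
  field_simp
  simp
  ring

lemma der_invY {f : ℝ → ℝ → ℝ} (hf : ContDiff ℝ (⊤ : ℕ∞) (Function.uncurry f))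
    (hf0 : ∀ x y, f x y ≠ 0) (x y : ℝ) :
    HasDerivAt (fun s => 1 / (f x s)^2) (-2 * pY f x y / (f x y)^3) y := by
  have h0 := hf0 x y
  refine ((hasDerivAt_const y (1:ℝ)).fun_div ((hasY hf x y).fun_pow 2)
    (pow_ne_zero 2 h0)).congr_deriv ?_
  field_simp
  simp
  ring

end derivs

/-- All partial derivatives needed, bundled. -/
lemma RTpd_all (a b d : ℝ) (f : ℝ → ℝ → ℝ) (hf : ContDiff ℝ (⊤ : ℕ∞) (Function.uncurry f))
    (hf0 : ∀ x y, f x y ≠ 0) (p : RTPt) (hp : p 1 ≠ 0) :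
    (RTpd 0 (RTq0 a b d) p = 0 ∧ RTpd 1 (RTq0 a b d) p = -2 * (-2 * b + d / (p 1)^2)
      ∧ RTpd 2 (RTq0 a b d) p = 0 ∧ RTpd 3 (RTq0 a b d) p = 0) ∧
    (RTpd 0 (RTq1 f) p = 0 ∧ RTpd 1 (RTq1 f) p = -2 * p 1 / (f (p 2) (p 3))^2
      ∧ RTpd 2 (RTq1 f) p = 2 * (p 1)^2 * pX f (p 2) (p 3) / (f (p 2) (p 3))^3
      ∧ RTpd 3 (RTq1 f) p = 2 * (p 1)^2 * pY f (p 2) (p 3) / (f (p 2) (p 3))^3) ∧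
    (RTpd 0 (RTH1 b d) p = 0 ∧ RTpd 1 (RTH1 b d) p = -2 * d / (p 1)^3
      ∧ RTpd 2 (RTH1 b d) p = 0 ∧ RTpd 3 (RTH1 b d) p = 0) ∧
    (RTpd 0 (RTH2 a b d) p = 0 ∧ RTpd 1 (RTH2 a b d) p = 2 * (-2 * b + d / (p 1)^2)^2
        + 2 * (a - 2 * b * p 1 - d / p 1) * (-2 * d / (p 1)^3)
      ∧ RTpd 2 (RTH2 a b d) p = 0 ∧ RTpd 3 (RTH2 a b d) p = 0) ∧
    (RTpd 0 (RTT1 f) p = 0 ∧ RTpd 1 (RTT1 f) p = 1 / (f (p 2) (p 3))^2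
      ∧ RTpd 2 (RTT1 f) p = -2 * p 1 * pX f (p 2) (p 3) / (f (p 2) (p 3))^3
      ∧ RTpd 3 (RTT1 f) p = -2 * p 1 * pY f (p 2) (p 3) / (f (p 2) (p 3))^3) ∧
    (RTpd 0 (RTT2 a b d f) p = 0
      ∧ RTpd 1 (RTT2 a b d f) p = 2 * (a - 4 * b * p 1) / (f (p 2) (p 3))^2
      ∧ RTpd 2 (RTT2 a b d f) p = -4 * (a - 2 * b * p 1 - d / p 1) * p 1
          * pX f (p 2) (p 3) / (f (p 2) (p 3))^3
      ∧ RTpd 3 (RTT2 a b d f) p = -4 * (a - 2 * b * p 1 - d / p 1) * p 1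
          * pY f (p 2) (p 3) / (f (p 2) (p 3))^3) ∧
    (RTpd 0 RTR p = 0 ∧ RTpd 1 RTR p = -1 / (p 1)^2 ∧ RTpd 2 RTR p = 0 ∧ RTpd 3 RTR p = 0) ∧
    (RTpd 0 (RTU f) p = 0 ∧ RTpd 1 (RTU f) p = 0
      ∧ RTpd 2 (RTU f) p = (pX (pX f) (p 2) (p 3) * f (p 2) (p 3)
          - pX f (p 2) (p 3) * pX f (p 2) (p 3)) / (f (p 2) (p 3))^2
      ∧ RTpd 3 (RTU f) p = (pY (pX f) (p 2) (p 3) * f (p 2) (p 3)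
          - pX f (p 2) (p 3) * pY f (p 2) (p 3)) / (f (p 2) (p 3))^2) ∧
    (RTpd 0 (RTV f) p = 0 ∧ RTpd 1 (RTV f) p = 0
      ∧ RTpd 2 (RTV f) p = (pY (pX f) (p 2) (p 3) * f (p 2) (p 3)
          - pY f (p 2) (p 3) * pX f (p 2) (p 3)) / (f (p 2) (p 3))^2
      ∧ RTpd 3 (RTV f) p = (pY (pY f) (p 2) (p 3) * f (p 2) (p 3)
          - pY f (p 2) (p 3) * pY f (p 2) (p 3)) / (f (p 2) (p 3))^2) := by
  have h0 := hf0 (p 2) (p 3)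
  have hh := der_h a b d hp
  have hh1 := der_h1 b d hp
  have iX := der_invX hf hf0 (p 2) (p 3)
  have iY := der_invY hf hf0 (p 2) (p 3)
  have fX := hasX hf (p 2) (p 3)
  have fY := hasY hf (p 2) (p 3)
  have XX := hasX (pX_smooth hf) (p 2) (p 3)
  have YX := hasY (pX_smooth hf) (p 2) (p 3)
  have XY := hasX (pY_smooth hf) (p 2) (p 3)
  have YY := hasY (pY_smooth hf) (p 2) (p 3)
  rw [pXY_comm hf] at XY
  have cX := hasDerivAt_const (p 2) (1:ℝ)
  have cY := hasDerivAt_const (p 3) (1:ℝ)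
  have cR := hasDerivAt_const (p 1) (1:ℝ)
  refine ⟨⟨RTsep_pd0 _ _ _, ?_, ?_, ?_⟩, ⟨RTsep_pd0 _ _ _, ?_, ?_, ?_⟩,
    ⟨RTsep_pd0 _ _ _, ?_, ?_, ?_⟩, ⟨RTsep_pd0 _ _ _, ?_, ?_, ?_⟩,
    ⟨RTsep_pd0 _ _ _, ?_, ?_, ?_⟩, ⟨RTsep_pd0 _ _ _, ?_, ?_, ?_⟩,
    ⟨RTsep_pd0 _ _ _, ?_, ?_, ?_⟩, ⟨RTsep_pd0 _ _ _, ?_, ?_, ?_⟩,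
    ⟨RTsep_pd0 _ _ _, ?_, ?_, ?_⟩⟩
  · rw [RTq0, RTsep_pd1 _ _ _ (hh.const_mul _)]; ring
  · rw [RTq0, RTsep_pd2 _ _ _ cX]; ring
  · rw [RTq0, RTsep_pd3 _ _ _ cY]; ring
  · rw [RTq1, RTsep_pd1 _ _ _ (hasDerivAt_pow 2 _).fun_neg]; simp; ring
  · rw [RTq1, RTsep_pd2 _ _ _ iX]; ring
  · rw [RTq1, RTsep_pd3 _ _ _ iY]; ring
  · rw [RTH1, RTsep_pd1 _ _ _ hh1]; ring
  · rw [RTH1, RTsep_pd2 _ _ _ cX]; ring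
  · rw [RTH1, RTsep_pd3 _ _ _ cY]; ring
  · rw [RTH2, RTsep_pd1 _ _ _ ((hh.const_mul 2).fun_mul hh1)]; ring
  · rw [RTH2, RTsep_pd2 _ _ _ cX]; ring
  · rw [RTH2, RTsep_pd3 _ _ _ cY]; ring
  · rw [RTT1, RTsep_pd1 _ _ _ (hasDerivAt_id' _)]; ring
  · rw [RTT1, RTsep_pd2 _ _ _ iX]; ring
  · rw [RTT1, RTsep_pd3 _ _ _ iY]; ring
  · rw [RTT2, RTsep_pd1 _ _ _ ((hh.const_mul 2).fun_mul (hasDerivAt_id' _))]; field_simp; ring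
  · rw [RTT2, RTsep_pd2 _ _ _ iX]; ring
  · rw [RTT2, RTsep_pd3 _ _ _ iY]; ring
  · rw [RTR, RTsep_pd1 _ _ _ (cR.fun_div (hasDerivAt_id' _) hp)]; ring
  · rw [RTR, RTsep_pd2 _ _ _ cX]; ring
  · rw [RTR, RTsep_pd3 _ _ _ cY]; ring
  · rw [RTU, RTsep_pd1 _ _ _ cR]; ring
  · have h := XX.fun_div fX h0
    rw [RTU, RTsep_pd2 _ _ _ h]; ring
  · have h := YX.fun_div fY h0
    rw [RTU, RTsep_pd3 _ _ _ h]; ring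
  · rw [RTV, RTsep_pd1 _ _ _ cR]; ring
  · have h := XY.fun_div fX h0
    rw [RTV, RTsep_pd2 _ _ _ h]; ring
  · have h := YY.fun_div fY h0
    rw [RTV, RTsep_pd3 _ _ _ h]; ring

set_option maxHeartbeats 4000000 in
lemma RTGamma_eq (a b d : ℝ) (f : ℝ → ℝ → ℝ) (hf : ContDiff ℝ (⊤ : ℕ∞) (Function.uncurry f))
    (hf0 : ∀ x y, f x y ≠ 0) (k i j : Fin 4) (p : RTPt) (hp : p 1 ≠ 0) :
    RTGamma a b d f k i j p = RTGx a b d f k i j p := by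
  have h0 := hf0 (p 2) (p 3)
  obtain ⟨⟨a0, a1, a2, a3⟩, ⟨b0, b1, b2, b3⟩, -⟩ := RTpd_all a b d f hf hf0 p hp
  unfold RTGamma
  simp only [RTg_eq, Fin.sum_univ_four]
  fin_cases k <;> fin_cases i <;> fin_cases j <;>
    simp [RTgInv, RTgx, RTGx, RTpd_const, a0, a1, a2, a3, b0, b1, b2, b3, RTH1, RTH2, RTT1, RTT2,
      RTR, RTU, RTV, RTsep] <;> field_simp <;> ring

set_option maxHeartbeats 1000000 in
lemma RTgInv_mul (a b d : ℝ) (f : ℝ → ℝ → ℝ) (hf0 : ∀ x y, f x y ≠ 0)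
    (p : RTPt) (hp : p 1 ≠ 0) (k α : Fin 4) :
    ∑ l : Fin 4, RTgInv a b d f k l p * RTg a b d f l α p = if k = α then 1 else 0 := by
  have h0 := hf0 (p 2) (p 3)
  rw [Fin.sum_univ_four]
  fin_cases k <;> fin_cases α <;> simp [RTgInv, RTg] <;> field_simp <;> ring

lemma RTRic_eq (a b d : ℝ) (f : ℝ → ℝ → ℝ) (hf : ContDiff ℝ (⊤ : ℕ∞) (Function.uncurry f))
    (hf0 : ∀ x y, f x y ≠ 0) (i j : Fin 4) (p : RTPt) (hp : p 1 ≠ 0) :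
    RTRic a b d f i j p = ∑ k : Fin 4,
      (RTpd j (RTGx a b d f k i k) p - RTpd k (RTGx a b d f k i j) p
      + ∑ β : Fin 4, (RTGx a b d f β i k p * RTGx a b d f k β j p
          - RTGx a b d f β i j p * RTGx a b d f k β k p)) := by
  unfold RTRic
  refine Finset.sum_congr rfl fun k _ => ?_
  have hG : ∀ l α i j : Fin 4,
      RTpd l (RTGamma a b d f α i j) p = RTpd l (RTGx a b d f α i j) p := fun l α i j =>
    RTpd_congr (fun q hq => RTGamma_eq a b d f hf hf0 α i j q hq) l p hp
  unfold RTRiem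
  simp only [hG, RTGamma_eq a b d f hf hf0 _ _ _ p hp]
  have key : ∀ T : Fin 4 → ℝ, ∑ l : Fin 4, RTgInv a b d f k l p *
      ∑ α : Fin 4, RTg a b d f l α p * T α = T k := by
    intro T
    simp only [Finset.mul_sum]
    rw [Finset.sum_comm]
    simp only [← mul_assoc, ← Finset.sum_mul, RTgInv_mul a b d f hf0 p hp]
    simp
  exact key (fun α => RTpd j (RTGx a b d f α i k) p - RTpd k (RTGx a b d f α i j) p
      + ∑ β : Fin 4, (RTGx a b d f β i k p * RTGx a b d f α β j p
          - RTGx a b d f β i j p * RTGx a b d f α β k p))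

set_option maxHeartbeats 4000000

/-- the Ricci tensor components of the Robinson–Trautman metric. -/
theorem RT_Ricci_components (a b d : ℝ) (f : ℝ → ℝ → ℝ)
    (hf : ContDiff ℝ (⊤ : ℕ∞) (Function.uncurry f)) (hf0 : ∀ x y, f x y ≠ 0) :
    ∀ p : RTPt, p 1 ≠ 0 → ∀ i j : Fin 4,
      RTRic a b d f i j p =
        if i = 0 ∧ j = 0 then -8*b*(d + p 1 * (-a + 2*b*p 1))/(p 1)^2
        else if (i = 0 ∧ j = 1) ∨ (i = 1 ∧ j = 0) then -4*b/(p 1)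
        else if (i = 2 ∧ j = 2) ∨ (i = 3 ∧ j = 3) then
          (-2*a + 8*b*p 1 + (pX f (p 2) (p 3))^2 + (pY f (p 2) (p 3))^2
            - f (p 2) (p 3) * (pX (pX f) (p 2) (p 3) + pY (pY f) (p 2) (p 3)))
            / (f (p 2) (p 3))^2
        else 0 := by
  intro p hp i j
  have h0 := hf0 (p 2) (p 3)
  rw [RTRic_eq a b d f hf hf0 i j p hp]
  obtain ⟨-, -, ⟨c0, c1, c2, c3⟩, ⟨d0, d1, d2, d3⟩, ⟨e0, e1, e2, e3⟩, ⟨f0, f1, f2, f3⟩,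
    ⟨g0, g1, g2, g3⟩, ⟨k0, k1, k2, k3⟩, ⟨l0, l1, l2, l3⟩⟩ := RTpd_all a b d f hf hf0 p hp
  simp only [Fin.sum_univ_four]
  fin_cases i <;> fin_cases j <;>
    simp [RTGx, RTpd_const, RTpd_neg, c0, c1, c2, c3, d0, d1, d2, d3, e0, e1, e2, e3, f0, f1, f2,
      f3, g0, g1, g2, g3, k0, k1, k2, k3, l0, l1, l2, l3] <;>
    (try simp [RTH1, RTH2, RTT1, RTT2, RTR, RTU, RTV, RTsep]) <;> (try field_simp) <;> (try ring)
end
end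

section
/- On the Robinson–Trautman spacetime with F₁ := f_x² + f_y² - f(f_{xx} + f_{yy}) and F₁ - 2a + 4br ≠ 0, the vector field X = ∂/∂r satisfies the tensor identity L_X g + (2r/(F₁ - 2a + 4br)) S + (8b/(F₁ - 2a + 4br)) g - (2(-d + 2br²)/r²) η⊗η = 0, where η is the 1-form with components (1,0,0,0) in coordinates (t,r,x,y). -/
open scoped BigOperators

noncomputable section

theorem aux_congr (i : Fin 4) (F G : RTPt → ℝ) (h : ∀ q : RTPt, q 1 ≠ 0 → F q = G q)
    (p : RTPt) (hp : p 1 ≠ 0) : RTpd i F p = RTpd i G p := by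
  unfold RTpd
  apply Filter.EventuallyEq.deriv_eq
  have hc : ContinuousAt (fun s : ℝ => Function.update p i s 1) (p i) := by
    have : Continuous (fun s : ℝ => Function.update p i s 1) :=
      (continuous_apply 1).comp ((continuous_const (y := p)).update i continuous_id)
    exact this.continuousAt
  have h1 : ∀ᶠ s in nhds (p i), Function.update p i s 1 ≠ 0 := by
    apply hc.eventually_ne
    simpa using hp
  filter_upwards [h1] with s hs
  exact h _ hs

/-- differentiation of a function of `(r,x,y)`. -/
theorem aux_pd (u : ℝ → ℝ → ℝ → ℝ) (p : RTPt) {d1 d2 d3 : ℝ}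
    (h1 : HasDerivAt (fun s => u s (p 2) (p 3)) d1 (p 1))
    (h2 : HasDerivAt (fun s => u (p 1) s (p 3)) d2 (p 2))
    (h3 : HasDerivAt (fun s => u (p 1) (p 2) s) d3 (p 3)) (i : Fin 4) :
    RTpd i (fun q => u (q 1) (q 2) (q 3)) p = (![0, d1, d2, d3] : Fin 4 → ℝ) i := by
  unfold RTpd
  fin_cases i
  · simp
  · simpa using h1.deriv
  · simpa using h2.deriv
  · simpa using h3.deriv

theorem aux_const (c : ℝ) (p : RTPt) (i : Fin 4) : RTpd i (fun _ => c) p = 0 := by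
  simp [RTpd]

theorem aux_neg (F : RTPt → ℝ) (p : RTPt) (i : Fin 4) :
    RTpd i (fun q => -F q) p = -RTpd i F p := by
  simp [RTpd]

section smooth
variable {f : ℝ → ℝ → ℝ}

theorem aux_dx (hf : ContDiff ℝ (⊤ : ℕ∞) (Function.uncurry f)) (x y : ℝ) :
    HasDerivAt (fun s => f s y) (pX f x y) x := by
  have : Differentiable ℝ (fun s => f s y) := by
    have h : ContDiff ℝ (⊤ : ℕ∞) (fun s => Function.uncurry f (s, y)) := by fun_prop
    exact h.differentiable (by simp)
  exact (this x).hasDerivAt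

theorem aux_dy (hf : ContDiff ℝ (⊤ : ℕ∞) (Function.uncurry f)) (x y : ℝ) :
    HasDerivAt (fun s => f x s) (pY f x y) y := by
  have : Differentiable ℝ (fun s => f x s) := by
    have h : ContDiff ℝ (⊤ : ℕ∞) (fun s => Function.uncurry f (x, s)) := by fun_prop
    exact h.differentiable (by simp)
  exact (this y).hasDerivAt

theorem aux_fx (hf : ContDiff ℝ (⊤ : ℕ∞) (Function.uncurry f)) (z : ℝ × ℝ) :
    pX f z.1 z.2 = fderiv ℝ (Function.uncurry f) z (1, 0) := by
  have h := (hf.differentiable (by simp) z).hasFDerivAt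
  have h2 : HasDerivAt (fun s : ℝ => (s, z.2)) ((1 : ℝ), (0 : ℝ)) z.1 :=
    (hasDerivAt_id _).prodMk (hasDerivAt_const _ _)
  exact (h.comp_hasDerivAt z.1 h2).deriv

theorem aux_fy (hf : ContDiff ℝ (⊤ : ℕ∞) (Function.uncurry f)) (z : ℝ × ℝ) :
    pY f z.1 z.2 = fderiv ℝ (Function.uncurry f) z (0, 1) := by
  have h := (hf.differentiable (by simp) z).hasFDerivAt
  have h2 : HasDerivAt (fun s : ℝ => (z.1, s)) ((0 : ℝ), (1 : ℝ)) z.2 :=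
    (hasDerivAt_const _ _).prodMk (hasDerivAt_id _)
  exact (h.comp_hasDerivAt z.2 h2).deriv

theorem aux_smX (hf : ContDiff ℝ (⊤ : ℕ∞) (Function.uncurry f)) :
    ContDiff ℝ (⊤ : ℕ∞) (Function.uncurry (pX f)) := by
  have : Function.uncurry (pX f) = fun z => fderiv ℝ (Function.uncurry f) z (1, 0) := by
    funext z; exact aux_fx hf z
  rw [this]
  exact (hf.fderiv_right (by simp)).clm_apply contDiff_const

theorem aux_smY (hf : ContDiff ℝ (⊤ : ℕ∞) (Function.uncurry f)) :
    ContDiff ℝ (⊤ : ℕ∞) (Function.uncurry (pY f)) := by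
  have : Function.uncurry (pY f) = fun z => fderiv ℝ (Function.uncurry f) z (0, 1) := by
    funext z; exact aux_fy hf z
  rw [this]
  exact (hf.fderiv_right (by simp)).clm_apply contDiff_const

theorem aux_symm (hf : ContDiff ℝ (⊤ : ℕ∞) (Function.uncurry f)) (x y : ℝ) :
    pX (pY f) x y = pY (pX f) x y := by
  have e1 : Function.uncurry (pX f) = fun z => fderiv ℝ (Function.uncurry f) z (1, 0) := by
    funext z; exact aux_fx hf z
  have e2 : Function.uncurry (pY f) = fun z => fderiv ℝ (Function.uncurry f) z (0, 1) := by
    funext z; exact aux_fy hf z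
  have hd : DifferentiableAt ℝ (fderiv ℝ (Function.uncurry f)) (x, y) :=
    ((hf.fderiv_right (m := (⊤ : ℕ∞)) (by simp)).differentiable (by simp)) _
  have a1 := aux_fx (aux_smY hf) (x, y)
  have a2 := aux_fy (aux_smX hf) (x, y)
  simp only at a1 a2
  rw [a1, a2, e1, e2]
  rw [fderiv_clm_apply hd (differentiableAt_const _), fderiv_clm_apply hd (differentiableAt_const _)]
  have hs : IsSymmSndFDerivAt ℝ (Function.uncurry f) (x, y) :=
    hf.contDiffAt.isSymmSndFDerivAt (by simp; exact WithTop.coe_le_coe.mpr le_top)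
  simpa using hs.eq (1, 0) (0, 1)

end smooth

/-- Partial derivatives `∂_l g_{ij}` in closed form. -/
def auxDg (b d : ℝ) (f : ℝ → ℝ → ℝ) (l i j : Fin 4) (p : RTPt) : ℝ :=
  if i = 0 ∧ j = 0 then (![0, 4 * b - 2 * d / (p 1)^2, 0, 0] : Fin 4 → ℝ) l
  else if (i = 2 ∧ j = 2) ∨ (i = 3 ∧ j = 3) then
    (![0, -2 * p 1 / (f (p 2) (p 3))^2,
      2 * (p 1)^2 * pX f (p 2) (p 3) / (f (p 2) (p 3))^3,
      2 * (p 1)^2 * pY f (p 2) (p 3) / (f (p 2) (p 3))^3] : Fin 4 → ℝ) l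
  else 0

theorem aux_dH (a b d r : ℝ) (hr : r ≠ 0) :
    HasDerivAt (fun s : ℝ => a - 2 * b * s - d / s) (-2 * b + d / r^2) r := by
  have h := (((hasDerivAt_const r a).sub ((hasDerivAt_id r).const_mul (2 * b)))).sub
    ((hasDerivAt_const r d).div (hasDerivAt_id r) hr)
  refine h.congr_deriv ?_
  simp
  field_simp
  ring

theorem aux_dg (a b d : ℝ) {f : ℝ → ℝ → ℝ}
    (hf : ContDiff ℝ (⊤ : ℕ∞) (Function.uncurry f)) (hf0 : ∀ x y, f x y ≠ 0)
    (l i j : Fin 4) (p : RTPt) (hp : p 1 ≠ 0) :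
    RTpd l (RTg a b d f i j) p = auxDg b d f l i j p := by
  unfold auxDg
  have e : RTg a b d f i j = fun p => RTg a b d f i j p := rfl
  rw [e]
  unfold RTg
  split_ifs with h1 h2 h3 h4
  · rw [aux_pd (fun r _ _ => -2 * (a - 2 * b * r - d / r)) p
      ((aux_dH a b d (p 1) hp).const_mul (-2)) (hasDerivAt_const _ _) (hasDerivAt_const _ _)]
    congr 1
    funext k
    fin_cases k <;> simp <;> ring
  · rcases h3 with h3 | h3 <;> rcases h2 with h2 | h2 <;> simp_all
  · exact aux_const 1 p l
  · have hF := hf0 (p 2) (p 3)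
    have hF2 : f (p 2) (p 3) ^ 2 ≠ 0 := pow_ne_zero 2 hF
    rw [aux_pd (fun r x y => -r^2 / (f x y)^2) p
      ((((hasDerivAt_id (p 1)).pow 2).neg).div_const _)
      ((hasDerivAt_const _ _).div ((aux_dx hf (p 2) (p 3)).pow 2) hF2)
      ((hasDerivAt_const _ _).div ((aux_dy hf (p 2) (p 3)).pow 2) hF2)]
    congr 1
    funext k
    fin_cases k <;> simp <;> field_simp
  · exact aux_const 0 p l

/-- Christoffel symbols in closed form, as functions of `(r,x,y)`. -/
def auxG (a b d : ℝ) (f : ℝ → ℝ → ℝ) (k i j : Fin 4) (r x y : ℝ) : ℝ :=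
  match k, i, j with
  | 0, 0, 0 => -(2 * b - d / r^2)
  | 0, 2, 2 => r / (f x y)^2
  | 0, 3, 3 => r / (f x y)^2
  | 1, 0, 0 => -(a - 2 * b * r - d / r) * (2 * (2 * b - d / r^2))
  | 1, 0, 1 => 2 * b - d / r^2
  | 1, 1, 0 => 2 * b - d / r^2
  | 1, 2, 2 => 2 * (a - 2 * b * r - d / r) * r / (f x y)^2
  | 1, 3, 3 => 2 * (a - 2 * b * r - d / r) * r / (f x y)^2
  | 2, 1, 2 => 1 / r
  | 2, 2, 1 => 1 / r
  | 2, 2, 2 => -(pX f x y / f x y)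
  | 2, 2, 3 => -(pY f x y / f x y)
  | 2, 3, 2 => -(pY f x y / f x y)
  | 2, 3, 3 => pX f x y / f x y
  | 3, 1, 3 => 1 / r
  | 3, 3, 1 => 1 / r
  | 3, 3, 3 => -(pY f x y / f x y)
  | 3, 2, 3 => -(pX f x y / f x y)
  | 3, 3, 2 => -(pX f x y / f x y)
  | 3, 2, 2 => pY f x y / f x y
  | _, _, _ => 0

theorem aux_Gamma (a b d : ℝ) {f : ℝ → ℝ → ℝ}
    (hf : ContDiff ℝ (⊤ : ℕ∞) (Function.uncurry f)) (hf0 : ∀ x y, f x y ≠ 0)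
    (k i j : Fin 4) (p : RTPt) (hp : p 1 ≠ 0) :
    RTGamma a b d f k i j p = auxG a b d f k i j (p 1) (p 2) (p 3) := by
  unfold RTGamma
  simp only [aux_dg a b d hf hf0 _ _ _ p hp, Fin.sum_univ_four]
  have hF := hf0 (p 2) (p 3)
  fin_cases k <;> fin_cases i <;> fin_cases j <;>
    simp [auxDg, RTgInv, auxG] <;> field_simp <;> ring

/-- Derivatives of the Christoffel symbols in closed form. -/
def auxDG (a b d : ℝ) (f : ℝ → ℝ → ℝ) (k i j : Fin 4) (r x y : ℝ) : Fin 4 → ℝ :=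
  let A : Fin 4 → ℝ := ![0, 2 * d / r^3, 0, 0]
  let C : Fin 4 → ℝ := ![0, 1 / (f x y)^2, -2 * r * pX f x y / (f x y)^3,
    -2 * r * pY f x y / (f x y)^3]
  let E : Fin 4 → ℝ := ![0, (2 * a - 8 * b * r) / (f x y)^2,
    -2 * (2 * (a - 2 * b * r - d / r) * r) * pX f x y / (f x y)^3,
    -2 * (2 * (a - 2 * b * r - d / r) * r) * pY f x y / (f x y)^3]
  let I : Fin 4 → ℝ := ![0, -1 / r^2, 0, 0]
  let P : Fin 4 → ℝ := ![0, 0, pX (pX f) x y / f x y - pX f x y * pX f x y / (f x y)^2,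
    pY (pX f) x y / f x y - pX f x y * pY f x y / (f x y)^2]
  let Q : Fin 4 → ℝ := ![0, 0, pY (pX f) x y / f x y - pY f x y * pX f x y / (f x y)^2,
    pY (pY f) x y / f x y - pY f x y * pY f x y / (f x y)^2]
  match k, i, j with
  | 0, 0, 0 => -A
  | 0, 2, 2 => C
  | 0, 3, 3 => C
  | 1, 0, 0 => ![0, (2 * b - d / r^2) * (4 * b - 2 * d / r^2)
      - (a - 2 * b * r - d / r) * (4 * d / r^3), 0, 0]
  | 1, 0, 1 => A
  | 1, 1, 0 => A
  | 1, 2, 2 => E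
  | 1, 3, 3 => E
  | 2, 1, 2 => I
  | 2, 2, 1 => I
  | 2, 2, 2 => -P
  | 2, 2, 3 => -Q
  | 2, 3, 2 => -Q
  | 2, 3, 3 => P
  | 3, 1, 3 => I
  | 3, 3, 1 => I
  | 3, 3, 3 => -Q
  | 3, 2, 3 => -P
  | 3, 3, 2 => -P
  | 3, 2, 2 => Q
  | _, _, _ => 0

theorem aux_pd' (u : ℝ → ℝ → ℝ → ℝ) (p : RTPt) (v : Fin 4 → ℝ) (h0 : v 0 = 0)
    (h1 : HasDerivAt (fun s => u s (p 2) (p 3)) (v 1) (p 1))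
    (h2 : HasDerivAt (fun s => u (p 1) s (p 3)) (v 2) (p 2))
    (h3 : HasDerivAt (fun s => u (p 1) (p 2) s) (v 3) (p 3)) (i : Fin 4) :
    RTpd i (fun q => u (q 1) (q 2) (q 3)) p = v i := by
  rw [aux_pd u p h1 h2 h3]
  fin_cases i <;> simp [h0]

theorem aux_dinv (r : ℝ) (hr : r ≠ 0) : HasDerivAt (fun s : ℝ => 1 / s) (-1 / r^2) r := by
  simpa [neg_div] using hasDerivAt_inv hr

theorem aux_dB (b d r : ℝ) (hr : r ≠ 0) :
    HasDerivAt (fun s : ℝ => 2 * b - d / s^2) (2 * d / r^3) r := by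
  have h := (hasDerivAt_const r (2 * b)).sub
    ((hasDerivAt_const r d).div ((hasDerivAt_id r).pow 2) (pow_ne_zero 2 hr))
  refine h.congr_deriv ?_
  simp
  field_simp

theorem aux_q {u v : ℝ → ℝ} {u' v' x : ℝ} (hu : HasDerivAt u u' x) (hv : HasDerivAt v v' x)
    (h : v x ≠ 0) : HasDerivAt (fun s => u s / v s) (u' / v x - u x * v' / (v x)^2) x := by
  refine (hu.div hv h).congr_deriv ?_
  field_simp

theorem aux_qc (c : ℝ) {v : ℝ → ℝ} {v' x : ℝ} (hv : HasDerivAt v v' x)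
    (h : v x ≠ 0) : HasDerivAt (fun s => c / (v s)^2) (-2 * c * v' / (v x)^3) x := by
  refine ((hasDerivAt_const x c).div (hv.pow 2) (pow_ne_zero 2 h)).congr_deriv ?_
  simp
  field_simp

theorem aux_DGamma (a b d : ℝ) {f : ℝ → ℝ → ℝ}
    (hf : ContDiff ℝ (⊤ : ℕ∞) (Function.uncurry f)) (hf0 : ∀ x y, f x y ≠ 0)
    (l k i j : Fin 4) (p : RTPt) (hp : p 1 ≠ 0) :
    RTpd l (RTGamma a b d f k i j) p = auxDG a b d f k i j (p 1) (p 2) (p 3) l := by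
  rw [aux_congr l _ (fun q => auxG a b d f k i j (q 1) (q 2) (q 3))
    (fun q hq => aux_Gamma a b d hf hf0 k i j q hq) p hp]
  have hF := hf0 (p 2) (p 3)
  have fx := aux_dx hf (p 2) (p 3)
  have fy := aux_dy hf (p 2) (p 3)
  have fxx := aux_dx (aux_smX hf) (p 2) (p 3)
  have fxy := aux_dy (aux_smX hf) (p 2) (p 3)
  have fyx := aux_dx (aux_smY hf) (p 2) (p 3)
  rw [aux_symm hf] at fyx
  have fyy := aux_dy (aux_smY hf) (p 2) (p 3)
  have hH := aux_dH a b d (p 1) hp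
  have hB := aux_dB b d (p 1) hp
  have hI := aux_dinv (p 1) hp
  have P2 := aux_q fxx fx hF
  have P3 := aux_q fxy fy hF
  have Q2 := aux_q fyx fx hF
  have Q3 := aux_q fyy fy hF
  have hC1 : HasDerivAt (fun s : ℝ => s / (f (p 2) (p 3))^2) (1 / (f (p 2) (p 3))^2) (p 1) :=
    (hasDerivAt_id _).div_const _
  have hC2 := aux_qc (p 1) fx hF
  have hC3 := aux_qc (p 1) fy hF
  have hE1 : HasDerivAt (fun s : ℝ => 2 * (a - 2 * b * s - d / s) * s / (f (p 2) (p 3))^2)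
      ((2 * a - 8 * b * p 1) / (f (p 2) (p 3))^2) (p 1) := by
    refine (((hH.const_mul 2).mul (hasDerivAt_id _)).div_const ((f (p 2) (p 3))^2)).congr_deriv ?_
    simp
    field_simp
    ring
  have hE2 := aux_qc (2 * (a - 2 * b * p 1 - d / p 1) * p 1) fx hF
  have hE3 := aux_qc (2 * (a - 2 * b * p 1 - d / p 1) * p 1) fy hF
  have hK : HasDerivAt (fun s : ℝ => -(a - 2 * b * s - d / s) * (2 * (2 * b - d / s^2)))
      ((2 * b - d / (p 1)^2) * (4 * b - 2 * d / (p 1)^2)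
      - (a - 2 * b * p 1 - d / p 1) * (4 * d / (p 1)^3)) (p 1) := by
    refine (hH.neg.mul (hB.const_mul 2)).congr_deriv ?_
    simp
    ring
  have TA := aux_pd' (fun r x y => 2 * b - d / r^2) p
    (![0, 2 * d / (p 1)^3, 0, 0] : Fin 4 → ℝ)
    rfl hB (hasDerivAt_const _ _) (hasDerivAt_const _ _) l
  have TAn := (aux_neg _ p l).trans (congrArg Neg.neg TA)
  have TC := aux_pd' (fun r x y => r / (f x y)^2) p
    (![0, 1 / (f (p 2) (p 3))^2, -2 * (p 1) * pX f (p 2) (p 3) / (f (p 2) (p 3))^3, -2 * (p 1) * pY f (p 2) (p 3) / (f (p 2) (p 3))^3] : Fin 4 → ℝ)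
    rfl hC1 hC2 hC3 l
  have TE := aux_pd' (fun r x y => 2 * (a - 2 * b * r - d / r) * r / (f x y)^2) p
    (![0, (2 * a - 8 * b * (p 1)) / (f (p 2) (p 3))^2, -2 * (2 * (a - 2 * b * (p 1) - d / (p 1)) * (p 1)) * pX f (p 2) (p 3) / (f (p 2) (p 3))^3, -2 * (2 * (a - 2 * b * (p 1) - d / (p 1)) * (p 1)) * pY f (p 2) (p 3) / (f (p 2) (p 3))^3] : Fin 4 → ℝ)
    rfl hE1 hE2 hE3 l
  have TK := aux_pd' (fun r x y => -(a - 2 * b * r - d / r) * (2 * (2 * b - d / r^2))) p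
    (![0, (2 * b - d / (p 1)^2) * (4 * b - 2 * d / (p 1)^2) - (a - 2 * b * (p 1) - d / (p 1)) * (4 * d / (p 1)^3), 0, 0] : Fin 4 → ℝ)
    rfl hK (hasDerivAt_const _ _) (hasDerivAt_const _ _) l
  have TI := aux_pd' (fun r x y => 1 / r) p
    (![0, -1 / (p 1)^2, 0, 0] : Fin 4 → ℝ)
    rfl hI (hasDerivAt_const _ _) (hasDerivAt_const _ _) l
  have TP := aux_pd' (fun r x y => pX f x y / f x y) p
    (![0, 0, pX (pX f) (p 2) (p 3) / f (p 2) (p 3) - pX f (p 2) (p 3) * pX f (p 2) (p 3) / (f (p 2) (p 3))^2, pY (pX f) (p 2) (p 3) / f (p 2) (p 3) - pX f (p 2) (p 3) * pY f (p 2) (p 3) / (f (p 2) (p 3))^2] : Fin 4 → ℝ)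
    rfl (hasDerivAt_const _ _) P2 P3 l
  have TPn := (aux_neg _ p l).trans (congrArg Neg.neg TP)
  have TQ := aux_pd' (fun r x y => pY f x y / f x y) p
    (![0, 0, pY (pX f) (p 2) (p 3) / f (p 2) (p 3) - pY f (p 2) (p 3) * pX f (p 2) (p 3) / (f (p 2) (p 3))^2, pY (pY f) (p 2) (p 3) / f (p 2) (p 3) - pY f (p 2) (p 3) * pY f (p 2) (p 3) / (f (p 2) (p 3))^2] : Fin 4 → ℝ)
    rfl (hasDerivAt_const _ _) Q2 Q3 l
  have TQn := (aux_neg _ p l).trans (congrArg Neg.neg TQ)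
  have TZ := aux_const 0 p l
  fin_cases k <;> fin_cases i <;> fin_cases j <;>
    first
    | exact TZ
    | exact TA
    | exact TAn
    | exact TC
    | exact TE
    | exact TK
    | exact TI
    | exact TP
    | exact TPn
    | exact TQ
    | exact TQn

theorem aux_Ric (a b d : ℝ) {f : ℝ → ℝ → ℝ}
    (hf : ContDiff ℝ (⊤ : ℕ∞) (Function.uncurry f)) (hf0 : ∀ x y, f x y ≠ 0)
    (i j : Fin 4) (p : RTPt) (hp : p 1 ≠ 0) :
    RTRic a b d f i j p =
      ∑ k : Fin 4, (auxDG a b d f k i k (p 1) (p 2) (p 3) j - auxDG a b d f k i j (p 1) (p 2) (p 3) k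
      + ∑ β : Fin 4, (auxG a b d f β i k (p 1) (p 2) (p 3) * auxG a b d f k β j (p 1) (p 2) (p 3)
          - auxG a b d f β i j (p 1) (p 2) (p 3) * auxG a b d f k β k (p 1) (p 2) (p 3))) := by
  unfold RTRic RTRiem
  simp only [aux_DGamma a b d hf hf0 _ _ _ _ p hp, aux_Gamma a b d hf hf0 _ _ _ p hp]
  have hF := hf0 (p 2) (p 3)
  generalize hW : (fun α k => (auxDG a b d f α i k (p 1) (p 2) (p 3) j - auxDG a b d f α i j (p 1) (p 2) (p 3) k
      + ∑ β : Fin 4, (auxG a b d f β i k (p 1) (p 2) (p 3) * auxG a b d f α β j (p 1) (p 2) (p 3)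
          - auxG a b d f β i j (p 1) (p 2) (p 3) * auxG a b d f α β k (p 1) (p 2) (p 3)))) = W
  have hW' := fun α k => congrFun (congrFun hW α) k
  simp only [hW']
  simp [Fin.sum_univ_four, RTg, RTgInv]
  field_simp

set_option maxHeartbeats 4000000 in
theorem aux_Ric_val (a b d : ℝ) {f : ℝ → ℝ → ℝ}
    (hf : ContDiff ℝ (⊤ : ℕ∞) (Function.uncurry f)) (hf0 : ∀ x y, f x y ≠ 0)
    (i j : Fin 4) (p : RTPt) (hp : p 1 ≠ 0) :
    RTRic a b d f i j p = if (i = 2 ∧ j = 2) ∨ (i = 3 ∧ j = 3) then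
      (F1 f (p 2) (p 3) - 2 * a + 8 * b * p 1) / (f (p 2) (p 3))^2
      else -(4 * b / p 1) * RTg a b d f i j p := by
  rw [aux_Ric a b d hf hf0 i j p hp]
  have hF := hf0 (p 2) (p 3)
  simp only [Fin.sum_univ_four]
  fin_cases i <;> fin_cases j <;> simp [auxDG, auxG, RTg, F1] <;> field_simp <;> ring

/-- the almost `η`-Ricci soliton identity along `X = ∂/∂r`. -/
theorem RT_eta_Ricci_soliton_dr (a b d : ℝ) (f : ℝ → ℝ → ℝ)
    (hf : ContDiff ℝ (⊤ : ℕ∞) (Function.uncurry f)) (hf0 : ∀ x y, f x y ≠ 0) :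
    ∀ p : RTPt, p 1 ≠ 0 →
      F1 f (p 2) (p 3) - 2*a + 4*b*p 1 ≠ 0 → ∀ i j : Fin 4,
      RTlie2 (fun _ k => if k = 1 then 1 else 0) (RTg a b d f) i j p
        + (2*p 1/(F1 f (p 2) (p 3) - 2*a + 4*b*p 1)) * RTRic a b d f i j p
        + (8*b/(F1 f (p 2) (p 3) - 2*a + 4*b*p 1)) * RTg a b d f i j p
        - (2*(-d + 2*b*(p 1)^2)/(p 1)^2)
            * ((if i = 0 then (1:ℝ) else 0) * (if j = 0 then (1:ℝ) else 0)) = 0 := by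
  intro p hp hD i j
  have hF := hf0 (p 2) (p 3)
  have hL : RTlie2 (fun _ k => if k = 1 then 1 else 0) (RTg a b d f) i j p
      = auxDg b d f 1 i j p := by
    unfold RTlie2
    simp [Fin.sum_univ_four, aux_const, aux_dg a b d hf hf0 _ _ _ p hp]
  rw [hL, aux_Ric_val a b d hf hf0 i j p hp]
  generalize F1 f (p 2) (p 3) = F at hD ⊢
  obtain ⟨D, rfl⟩ : ∃ D, F = D + 2 * a - 4 * b * p 1 := ⟨F - 2 * a + 4 * b * p 1, by ring⟩
  have e : D + 2 * a - 4 * b * p 1 - 2 * a + 4 * b * p 1 = D := by ring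
  rw [e] at hD ⊢
  fin_cases i <;> fin_cases j <;> simp [auxDg, RTg] <;> field_simp <;> ring
end
end
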